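/- For a reversible chain, k₂ > 0 if and only if 0 < k and K < 2. -/

import Mathlib

/-!
Write `Q(S, T) = ∫_S p(x, T) π(dx)`, the law of `(X₀, X₁)` on rectangles; it is nonnegative,
additive in each argument, and symmetric by reversibility. Put `u(x) = p(x, A)`, `a = π(A)`,
`b = π(Aᶜ)`. Reversibility turns the two-step flow out of `A` into `F = ∫ u (1 - u) dπ`
(`flow_two_eq`).

*Necessity.* For every `B` one has `F ≤ Q(B, A) + Q(Bᶜ, Aᶜ)` (`flow_two_le`). With `B = Aᶜ` this
gives `k₂(A) ≤ 2 k(A)`, hence `k > 0` when `k₂ > 0`. With `B = A` it gives `F ≤ 1 - 2 Q(A, Aᶜ)`;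
if `k(A) ≥ 2 - ε`, then `a` and `b` are close to `1/2` because `Q(A, Aᶜ) ≤ min a b`, and the
right side is then of order `ε`. So `k₂ > 0` also forces `K < 2`.

*Sufficiency.* If `η = k₂(A)` is small, then `u` is mostly close to `0` or `1`; with `B = {u ≥ 1/2}`
both `Q(B, Aᶜ)` and `Q(Bᶜ, A)` are at most `2F = 2ηab` (`exists_cut`): the chain essentially
exchanges `A` and `B`. Hence little flow leaves `A ∩ B` or `A ∪ B`, and `k > 0` makes
`π(A ∩ B)` and `π((A ∪ B)ᶜ)` at most `4ηa/k` and `4ηb/k`. Thus `B` is nearly `Aᶜ`, the chain nearly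
always leaves both `A` and `Aᶜ`, and `1 ≤ 2 Q(A, Aᶜ) + η (1 + 4/k) ≤ K/2 + η (1 + 4/k)`.
This bounds `k₂` below by `(1 - K/2) / (1 + 4/k)`.
-/

open MeasureTheory ProbabilityTheory

/-- The `n`-step transition kernel (`n`-fold composition of `κ`). -/
noncomputable def kpow {Ω : Type*} [MeasurableSpace Ω] (κ : Kernel Ω Ω) : ℕ → Kernel Ω Ω
  | 0 => Kernel.id
  | n + 1 => (kpow κ n) ∘ₖ κ

/-- The probability flow out of the set `A`: `∫_A p(x, Aᶜ) π(dx)`. -/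
noncomputable def flow {Ω : Type*} [MeasurableSpace Ω] (κ : Kernel Ω Ω) (π : Measure Ω)
    (A : Set Ω) : ℝ :=
  (∫⁻ x in A, κ x Aᶜ ∂π).toReal

/-- The isoperimetric quantity `k(A) = (1/(π(A)π(Aᶜ))) ∫_A p(x, Aᶜ) π(dx)`. -/
noncomputable def isoQ {Ω : Type*} [MeasurableSpace Ω] (κ : Kernel Ω Ω) (π : Measure Ω)
    (A : Set Ω) : ℝ :=
  flow κ π A / ((π A).toReal * (π Aᶜ).toReal)

/-- Reversibility: `π(dx)p(x,dy) = π(dy)p(y,dx)`. -/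
def Reversible {Ω : Type*} [MeasurableSpace Ω] (κ : Kernel Ω Ω) (π : Measure Ω) : Prop :=
  ∀ A B : Set Ω, MeasurableSet A → MeasurableSet B →
    ∫⁻ x in A, κ x B ∂π = ∫⁻ x in B, κ x A ∂π

/-- `k_n := inf over A with 0 < π(A) < 1 of k_n(A)`, the `n`-step isoperimetric constant. -/
noncomputable def kinfN {Ω : Type*} [MeasurableSpace Ω] (κ : Kernel Ω Ω) (π : Measure Ω)
    (n : ℕ) : ℝ :=
  sInf ((fun A => isoQ (kpow κ n) π A) ''
    {A : Set Ω | MeasurableSet A ∧ 0 < π A ∧ π A < 1})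

/-- `K := sup over A with 0 < π(A) < 1 of k(A)`. -/
noncomputable def Ksup {Ω : Type*} [MeasurableSpace Ω] (κ : Kernel Ω Ω) (π : Measure Ω) : ℝ :=
  sSup ((fun A => isoQ κ π A) ''
    {A : Set Ω | MeasurableSet A ∧ 0 < π A ∧ π A < 1})

set_option linter.unusedSectionVars false

section Aux

variable {Ω : Type*} [MeasurableSpace Ω]

/-- `Q(S, T) = ∫_S p(x, T) π(dx) = P(X₀ ∈ S, X₁ ∈ T)`, as a real number. -/
noncomputable def jointQ (κ : Kernel Ω Ω) (π : Measure Ω) (S T : Set Ω) : ℝ :=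
  (∫⁻ x in S, κ x T ∂π).toReal

variable {κ : Kernel Ω Ω} [IsMarkovKernel κ] {π : Measure Ω} [IsProbabilityMeasure π]

lemma jointQ_eq {S T : Set Ω} (hS : MeasurableSet S) (hT : MeasurableSet T) :
    jointQ κ π S T = (π ⊗ₘ κ).real (S ×ˢ T) := by
  rw [jointQ, Measure.real, Measure.compProd_apply_prod hS hT]

lemma jointQ_ne_top (S T : Set Ω) : ∫⁻ x in S, κ x T ∂π ≠ ⊤ := by
  have h : ∫⁻ x in S, κ x T ∂π ≤ ∫⁻ _ in S, 1 ∂π := lintegral_mono fun x => prob_le_one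
  exact ne_top_of_le_ne_top (by simp) h

lemma jointQ_nonneg (S T : Set Ω) : 0 ≤ jointQ κ π S T := ENNReal.toReal_nonneg

/-- A cover of a rectangle by two rectangles bounds its mass. -/
lemma jointQ_le_add {S T S₁ T₁ S₂ T₂ : Set Ω} (hS : MeasurableSet S) (hT : MeasurableSet T)
    (hS₁ : MeasurableSet S₁) (hT₁ : MeasurableSet T₁) (hS₂ : MeasurableSet S₂)
    (hT₂ : MeasurableSet T₂) (h : S ×ˢ T ⊆ S₁ ×ˢ T₁ ∪ S₂ ×ˢ T₂) :
    jointQ κ π S T ≤ jointQ κ π S₁ T₁ + jointQ κ π S₂ T₂ := by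
  rw [jointQ_eq hS hT, jointQ_eq hS₁ hT₁, jointQ_eq hS₂ hT₂]
  exact (measureReal_mono h).trans (measureReal_union_le _ _)

lemma jointQ_mono {S T S' T' : Set Ω} (hS : MeasurableSet S) (hT : MeasurableSet T)
    (hS' : MeasurableSet S') (hT' : MeasurableSet T') (h₁ : S ⊆ S') (h₂ : T ⊆ T') :
    jointQ κ π S T ≤ jointQ κ π S' T' := by
  rw [jointQ_eq hS hT, jointQ_eq hS' hT']
  exact measureReal_mono (Set.prod_mono h₁ h₂)

lemma jointQ_univ (S : Set Ω) : jointQ κ π S Set.univ = π.real S := by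
  simp [jointQ, Measure.real]

lemma jointQ_add_compl {S T : Set Ω} (hS : MeasurableSet S) (hT : MeasurableSet T) :
    jointQ κ π S T + jointQ κ π S Tᶜ = π.real S := by
  rw [← jointQ_univ (κ := κ), jointQ_eq hS hT, jointQ_eq hS hT.compl, jointQ_eq hS .univ,
    ← measureReal_union _ (hS.prod hT.compl), ← Set.prod_union, Set.union_compl_self]
  exact Set.disjoint_left.2 fun x h₁ h₂ => h₂.2 h₁.2

lemma jointQ_symm (hrev : Reversible κ π) {S T : Set Ω} (hS : MeasurableSet S)
    (hT : MeasurableSet T) : jointQ κ π S T = jointQ κ π T S := by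
  rw [jointQ, jointQ, hrev S T hS hT]

/-- By reversibility, `P(X₀ ∈ A, X₂ ∈ Aᶜ) = ∫ p(y, A) p(y, Aᶜ) π(dy)`. -/
lemma flow_two_eq (hrev : Reversible κ π) {A : Set Ω} (hA : MeasurableSet A) :
    flow (kpow κ 2) π A = (∫⁻ y, κ y A * κ y Aᶜ ∂π).toReal := by
  have hk : kpow κ 2 = κ ∘ₖ κ := by simp [kpow]
  -- the law of `X₁` restricted to `X₀ ∈ A` has density `p(·, A)`
  have hm : Measure.bind (π.restrict A) κ = π.withDensity (fun y => κ y A) := by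
    ext B hB
    rw [Measure.bind_apply hB κ.measurable.aemeasurable, withDensity_apply _ hB]
    exact hrev A B hA hB
  have hmA := κ.measurable_coe hA
  have hmAc := κ.measurable_coe hA.compl
  rw [flow, hk]
  congr 1
  calc ∫⁻ x in A, (κ ∘ₖ κ) x Aᶜ ∂π = ∫⁻ x in A, ∫⁻ y, κ y Aᶜ ∂(κ x) ∂π := by
        simp_rw [Kernel.comp_apply' κ κ _ hA.compl]
    _ = ∫⁻ y, κ y Aᶜ ∂(Measure.bind (π.restrict A) κ) :=
        (Measure.lintegral_bind κ.measurable.aemeasurable hmAc.aemeasurable).symm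
    _ = _ := by rw [hm, lintegral_withDensity_eq_lintegral_mul _ hmA hmAc]; rfl

lemma flow_two_le (hrev : Reversible κ π) {A B : Set Ω} (hA : MeasurableSet A)
    (hB : MeasurableSet B) :
    flow (kpow κ 2) π A ≤ jointQ κ π B A + jointQ κ π Bᶜ Aᶜ := by
  rw [flow_two_eq hrev hA, jointQ, jointQ,
    ← ENNReal.toReal_add (jointQ_ne_top _ _) (jointQ_ne_top _ _)]
  refine ENNReal.toReal_mono (ENNReal.add_ne_top.2 ⟨jointQ_ne_top _ _, jointQ_ne_top _ _⟩) ?_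
  rw [← lintegral_add_compl _ hB]
  exact add_le_add (lintegral_mono fun x => mul_le_of_le_one_right' prob_le_one)
    (lintegral_mono fun x => mul_le_of_le_one_left' prob_le_one)

/-- The cut `B = {p(·, A) ≥ 1/2}`: when the two-step flow out of `A` is small, one step from `B`
mostly leads to `A`, and one step from `Bᶜ` mostly leads to `Aᶜ`. -/
lemma exists_cut (hrev : Reversible κ π) {A : Set Ω} (hA : MeasurableSet A) :
    ∃ B, MeasurableSet B ∧ jointQ κ π B Aᶜ ≤ 2 * flow (kpow κ 2) π A ∧
      jointQ κ π Bᶜ A ≤ 2 * flow (kpow κ 2) π A := by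
  have hmA := κ.measurable_coe hA
  have hmAc := κ.measurable_coe hA.compl
  have hB : MeasurableSet {x | κ x Aᶜ ≤ κ x A} := measurableSet_le hmAc hmA
  have hsum : ∀ x, κ x A + κ x Aᶜ = 1 := fun x => prob_add_prob_compl hA
  have hfin : 2 * ∫⁻ y, κ y A * κ y Aᶜ ∂π ≠ ⊤ := by
    have h : ∫⁻ y, κ y A * κ y Aᶜ ∂π ≤ ∫⁻ _, 1 ∂π :=
      lintegral_mono fun x => mul_le_one' prob_le_one prob_le_one
    exact ENNReal.mul_ne_top (by simp) (ne_top_of_le_ne_top (by simp) h)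
  have hF : 2 * flow (kpow κ 2) π A = (2 * ∫⁻ y, κ y A * κ y Aᶜ ∂π).toReal := by
    rw [flow_two_eq hrev hA, ENNReal.toReal_mul]; rfl
  have hI : ∀ S : Set Ω, ∫⁻ y in S, 2 * (κ y A * κ y Aᶜ) ∂π ≤ 2 * ∫⁻ y, κ y A * κ y Aᶜ ∂π := by
    intro S
    exact (setLIntegral_le_lintegral _ _).trans_eq (lintegral_const_mul _ (hmA.mul hmAc))
  refine ⟨_, hB, ?_, ?_⟩ <;> rw [hF] <;> refine ENNReal.toReal_mono hfin ?_
  · refine (setLIntegral_mono (by fun_prop) fun x hx => ?_).trans (hI _)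
    have h1 : 1 ≤ 2 * κ x A := by
      rw [← hsum x, two_mul]; exact add_le_add le_rfl hx
    calc κ x Aᶜ = 1 * κ x Aᶜ := (one_mul _).symm
      _ ≤ 2 * κ x A * κ x Aᶜ := by gcongr
      _ = _ := mul_assoc _ _ _
  · refine (setLIntegral_mono (by fun_prop) fun x hx => ?_).trans (hI _)
    have hx' : ¬ κ x Aᶜ ≤ κ x A := hx
    have h1 : 1 ≤ 2 * κ x Aᶜ := by
      rw [← hsum x, two_mul]; exact add_le_add (not_le.1 hx').le le_rfl
    calc κ x A = 1 * κ x A := (one_mul _).symm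
      _ ≤ 2 * κ x Aᶜ * κ x A := by gcongr
      _ = _ := by ring

lemma isoQ_nonneg (η : Kernel Ω Ω) (A : Set Ω) : 0 ≤ isoQ η π A := by
  unfold isoQ flow; positivity

lemma kinfN_le (n : ℕ) {A : Set Ω} (hA : MeasurableSet A) (h0 : 0 < π A) (h1 : π A < 1) :
    kinfN κ π n ≤ isoQ (kpow κ n) π A :=
  csInf_le ⟨0, by rintro _ ⟨B, -, rfl⟩; exact isoQ_nonneg _ B⟩ ⟨A, ⟨hA, h0, h1⟩, rfl⟩

lemma real_pos_lt {A : Set Ω} (hA : MeasurableSet A) (h0 : 0 < π A) (h1 : π A < 1) :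
    0 < π.real A ∧ 0 < π.real Aᶜ ∧ π.real A + π.real Aᶜ = 1 := by
  have hs : π.real A + π.real Aᶜ = 1 := probReal_add_probReal_compl hA
  have hlt : π.real A < 1 := by
    have := (ENNReal.toReal_lt_toReal (measure_ne_top π A) ENNReal.one_ne_top).2 h1
    simpa [Measure.real] using this
  exact ⟨ENNReal.toReal_pos h0.ne' (measure_ne_top π A), by linarith, hs⟩

lemma flow_eq_isoQ_mul (η : Kernel Ω Ω) {A : Set Ω} (hA : MeasurableSet A) (h0 : 0 < π A)
    (h1 : π A < 1) : flow η π A = isoQ η π A * (π.real A * π.real Aᶜ) := by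
  obtain ⟨ha, hb, -⟩ := real_pos_lt hA h0 h1
  exact (div_mul_cancel₀ _ (mul_pos ha hb).ne').symm

lemma kpow_one (κ : Kernel Ω Ω) : kpow κ 1 = κ := by simp [kpow]

/-- The defining inequality of `k`, valid also for null and conull sets. -/
lemma kinf_mul_le {S : Set Ω} (hS : MeasurableSet S) :
    kinfN κ π 1 * (π.real S * π.real Sᶜ) ≤ jointQ κ π S Sᶜ := by
  by_cases h0 : π S = 0
  · simp [Measure.real, h0, jointQ_nonneg]
  by_cases h1 : π S = 1
  · have : π Sᶜ = 0 := (prob_compl_eq_zero_iff hS).2 h1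
    simp [Measure.real, this, jointQ_nonneg]
  have h0' := pos_iff_ne_zero.2 h0
  have h1' := lt_of_le_of_ne prob_le_one h1
  have hk := kinfN_le (κ := κ) 1 hS h0' h1'
  rw [kpow_one] at hk
  calc _ ≤ isoQ κ π S * (π.real S * π.real Sᶜ) := by gcongr
    _ = flow κ π S := (flow_eq_isoQ_mul κ hS h0' h1').symm

/-- The one-step flow out of `A` is at most `min (π A) (π Aᶜ)`. -/
lemma flow_le (hrev : Reversible κ π) {A : Set Ω} (hA : MeasurableSet A) :
    flow κ π A ≤ π.real A ∧ flow κ π A ≤ π.real Aᶜ := by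
  change jointQ κ π A Aᶜ ≤ _ ∧ jointQ κ π A Aᶜ ≤ _
  constructor
  · rw [← jointQ_add_compl (κ := κ) hA hA]
    linarith [jointQ_nonneg (κ := κ) (π := π) A A]
  · rw [jointQ_symm hrev hA hA.compl, ← jointQ_add_compl (κ := κ) hA.compl hA]
    linarith [jointQ_nonneg (κ := κ) (π := π) Aᶜ Aᶜ]

lemma isoQ_le_two (hrev : Reversible κ π) {A : Set Ω} (hA : MeasurableSet A) (h0 : 0 < π A)
    (h1 : π A < 1) : isoQ κ π A ≤ 2 := by
  obtain ⟨ha, hb, hs⟩ := real_pos_lt hA h0 h1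
  obtain ⟨hfa, hfb⟩ := flow_le hrev hA
  refine (div_le_iff₀ (mul_pos ha hb)).2 ?_
  change _ ≤ 2 * (π.real A * π.real Aᶜ)
  rcases le_total (π.real A) (π.real Aᶜ) with h | h <;> nlinarith

lemma isoQ_le_Ksup (hrev : Reversible κ π) {A : Set Ω} (hA : MeasurableSet A) (h0 : 0 < π A)
    (h1 : π A < 1) : isoQ κ π A ≤ Ksup κ π :=
  le_csSup ⟨2, by rintro _ ⟨B, ⟨hB, hB0, hB1⟩, rfl⟩; exact isoQ_le_two hrev hB hB0 hB1⟩
    ⟨A, ⟨hA, h0, h1⟩, rfl⟩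

lemma isoQ_two_le (hrev : Reversible κ π) {A : Set Ω} (hA : MeasurableSet A) :
    isoQ (kpow κ 2) π A ≤ 2 * isoQ κ π A := by
  have h := flow_two_le hrev hA hA.compl
  rw [compl_compl, jointQ_symm hrev hA.compl hA] at h
  have h' : flow (kpow κ 2) π A ≤ 2 * flow κ π A := h.trans_eq (two_mul _).symm
  rw [isoQ, isoQ, ← mul_div_assoc]
  gcongr

/-- `P(X₀ ∈ A, X₂ ∈ Aᶜ) ≤ P(X₀ ∈ A, X₁ ∈ A) + P(X₁ ∈ Aᶜ, X₂ ∈ Aᶜ) = 1 - 2 P(X₀ ∈ A, X₁ ∈ Aᶜ)`. -/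
lemma flow_two_le_one_sub (hrev : Reversible κ π) {A : Set Ω} (hA : MeasurableSet A) :
    flow (kpow κ 2) π A ≤ 1 - 2 * flow κ π A := by
  have h := flow_two_le hrev hA hA
  have h1 := jointQ_add_compl (κ := κ) (π := π) hA hA
  have h2 := jointQ_add_compl (κ := κ) (π := π) hA.compl hA
  have h3 : π.real A + π.real Aᶜ = 1 := probReal_add_probReal_compl hA
  rw [jointQ_symm hrev hA.compl hA] at h2
  change _ ≤ 1 - 2 * jointQ κ π A Aᶜ
  linarith

/-- If `c ≤ k₂(A)`, then `k(A)` is bounded away from `2`. -/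
lemma isoQ_le_sub (hrev : Reversible κ π) {A : Set Ω} (hA : MeasurableSet A) (h0 : 0 < π A)
    (h1 : π A < 1) {c : ℝ} (hc : 0 < c) (hcA : c ≤ isoQ (kpow κ 2) π A) :
    isoQ κ π A ≤ 2 - c / 8 := by
  obtain ⟨ha, hb, hs⟩ := real_pos_lt hA h0 h1
  obtain ⟨hfa, hfb⟩ := flow_le hrev hA
  have h2 := flow_two_le_one_sub hrev hA
  have hc4 : c ≤ 4 := by linarith [isoQ_two_le hrev hA, isoQ_le_two hrev hA h0 h1]
  rw [flow_eq_isoQ_mul _ hA h0 h1] at hfa hfb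
  rw [flow_eq_isoQ_mul _ hA h0 h1, flow_eq_isoQ_mul κ hA h0 h1] at h2
  generalize isoQ κ π A = q at *
  generalize isoQ (kpow κ 2) π A = r at *
  generalize π.real A = a at *
  generalize π.real Aᶜ = b at *
  by_contra! hq
  have hqa : q * a ≤ 1 := by nlinarith
  have hqb : q * b ≤ 1 := by nlinarith
  have hab := mul_pos ha hb
  -- with `t = 2 - ε`, `ε = c / 8`: both `a` and `b` are at most `1 / t`, so `a b ≥ (t - 1) / t²`
  set t : ℝ := 2 - c / 8 with ht
  have hta : t * a ≤ 1 := by nlinarith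
  have htb : t * b ≤ 1 := by nlinarith
  have hprod : t - 1 ≤ t ^ 2 * (a * b) := by
    have := mul_nonneg (sub_nonneg.2 hta) (sub_nonneg.2 htb)
    have hb' : b = 1 - a := by linarith
    subst hb'
    nlinarith
  have hub : (c + 2 * t) * (a * b) ≤ 1 := by nlinarith
  have hfin : (c + 2 * t) * (t - 1) ≤ t ^ 2 := by
    have := mul_le_mul_of_nonneg_left hprod (by linarith : 0 ≤ c + 2 * t)
    nlinarith [sq_nonneg t]
  nlinarith

/-- The quantitative step: `1 - K/2 ≤ k₂(A) (1 + 4/k)`. -/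
lemma one_sub_le (hrev : Reversible κ π) (hk : 0 < kinfN κ π 1) {A : Set Ω}
    (hA : MeasurableSet A) (h0 : 0 < π A) (h1 : π A < 1) :
    1 - Ksup κ π / 2 ≤ isoQ (kpow κ 2) π A * (1 + 4 / kinfN κ π 1) := by
  obtain ⟨ha, hb, hs⟩ := real_pos_lt hA h0 h1
  obtain ⟨B, hB, hBA, hBA'⟩ := exists_cut hrev hA
  rw [jointQ_symm hrev hB.compl hA] at hBA'
  have hinvS : ∀ S T : Set Ω, MeasurableSet S → MeasurableSet T →
      jointQ κ π S T ≤ π.real T := fun S T hS hT => by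
    rw [jointQ_symm hrev hS hT, ← jointQ_univ (κ := κ)]
    exact jointQ_mono hT hS hT .univ le_rfl (Set.subset_univ _)
  -- little mass leaves `A ∩ B` or `A ∪ B`
  have hI : jointQ κ π (A ∩ B) (A ∩ B)ᶜ ≤ jointQ κ π B Aᶜ + jointQ κ π A Bᶜ := by
    refine jointQ_le_add (hA.inter hB) (hA.inter hB).compl hB hA.compl hA hB.compl ?_
    rintro ⟨x, y⟩ ⟨hx, hy⟩
    simp only [Set.mem_inter_iff, Set.mem_compl_iff, Set.mem_union, Set.mem_prod] at *
    tauto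
  have hU : jointQ κ π (A ∪ B) (A ∪ B)ᶜ ≤ jointQ κ π B Aᶜ + jointQ κ π A Bᶜ := by
    refine jointQ_le_add (hA.union hB) (hA.union hB).compl hB hA.compl hA hB.compl ?_
    rintro ⟨x, y⟩ ⟨hx, hy⟩
    simp only [Set.mem_compl_iff, Set.mem_union, Set.mem_prod] at *
    tauto
  have hkI := (kinf_mul_le (κ := κ) (π := π) (hA.inter hB)).trans hI
  have hkU := (kinf_mul_le (κ := κ) (π := π) (hA.union hB)).trans hU
  have hbI : π.real Aᶜ ≤ π.real (A ∩ B)ᶜ :=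
    measureReal_mono (Set.compl_subset_compl.2 Set.inter_subset_left)
  have haU : π.real A ≤ π.real (A ∪ B) := measureReal_mono Set.subset_union_left
  -- a step from `A` leads to `Aᶜ`, to `Bᶜ`, or to the small set `A ∩ B`
  have hfa : π.real A ≤ jointQ κ π A Aᶜ + jointQ κ π A Bᶜ + π.real (A ∩ B) := by
    have e1 := jointQ_add_compl (κ := κ) (π := π) hA hA
    have e2 : jointQ κ π A A ≤ jointQ κ π A Bᶜ + jointQ κ π A (A ∩ B) := by
      refine jointQ_le_add hA hA hA hB.compl hA (hA.inter hB) ?_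
      rintro ⟨x, y⟩ ⟨hx, hy⟩
      simp only [Set.mem_inter_iff, Set.mem_compl_iff, Set.mem_union, Set.mem_prod] at *
      tauto
    have e3 := hinvS A (A ∩ B) hA (hA.inter hB)
    linarith
  -- a step into `Aᶜ` comes from `A`, from `B`, or from the small set `(A ∪ B)ᶜ`
  have hfb : π.real Aᶜ ≤ jointQ κ π A Aᶜ + jointQ κ π B Aᶜ + π.real (A ∪ B)ᶜ := by
    have e1 := jointQ_add_compl (κ := κ) (π := π) hA.compl hA
    rw [jointQ_symm hrev hA.compl hA] at e1
    have e2 : jointQ κ π Aᶜ Aᶜ ≤ jointQ κ π B Aᶜ + jointQ κ π Aᶜ (A ∪ B)ᶜ := by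
      rw [jointQ_symm hrev hA.compl (hA.union hB).compl]
      refine jointQ_le_add hA.compl hA.compl hB hA.compl (hA.union hB).compl hA.compl ?_
      rintro ⟨x, y⟩ ⟨hx, hy⟩
      simp only [Set.mem_compl_iff, Set.mem_union, Set.mem_prod] at *
      tauto
    have e3 := hinvS Aᶜ (A ∪ B)ᶜ hA.compl (hA.union hB).compl
    linarith
  have hf : jointQ κ π A Aᶜ ≤ Ksup κ π * (π.real A * π.real Aᶜ) := by
    have := isoQ_le_Ksup hrev hA h0 h1
    calc jointQ κ π A Aᶜ = isoQ κ π A * (π.real A * π.real Aᶜ) := flow_eq_isoQ_mul κ hA h0 h1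
      _ ≤ _ := by gcongr
  have hK : 0 ≤ Ksup κ π := (isoQ_nonneg κ A).trans (isoQ_le_Ksup hrev hA h0 h1)
  have hη : 0 ≤ isoQ (kpow κ 2) π A := isoQ_nonneg _ A
  rw [flow_eq_isoQ_mul _ hA h0 h1] at hBA hBA'
  have hIn : 0 ≤ π.real (A ∩ B) := measureReal_nonneg
  have hUn : 0 ≤ π.real (A ∪ B)ᶜ := measureReal_nonneg
  generalize isoQ (kpow κ 2) π A = η at *
  generalize kinfN κ π 1 = k at *
  generalize Ksup κ π = K at *
  generalize π.real A = a at *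
  generalize π.real Aᶜ = b at *
  generalize π.real (A ∩ B) = i at *
  generalize π.real (A ∪ B)ᶜ = o at *
  have hi : i ≤ 4 * η * a / k := by
    rw [le_div_iff₀ hk]
    refine le_of_mul_le_mul_right ?_ hb
    have := mul_le_mul_of_nonneg_left hbI (mul_nonneg hk.le hIn)
    nlinarith
  have ho : o ≤ 4 * η * b / k := by
    rw [le_div_iff₀ hk]
    refine le_of_mul_le_mul_right ?_ ha
    have := mul_le_mul_of_nonneg_left haU (mul_nonneg hk.le hUn)
    nlinarith
  have hio : i + o ≤ η * (4 / k) := by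
    calc i + o ≤ 4 * η * a / k + 4 * η * b / k := add_le_add hi ho
      _ = η * (4 / k) * (a + b) := by ring
      _ = _ := by rw [hs, mul_one]
  have hab : a * b ≤ 1 / 4 := by nlinarith [sq_nonneg (a - b)]
  have hKab := mul_le_mul_of_nonneg_left hab hK
  have hηab := mul_le_mul_of_nonneg_left hab hη
  linarith

end Aux

/-- For a reversible chain, `k₂ > 0 ↔ (0 < k ∧ K < 2)`. -/
theorem k2_pos_iff {Ω : Type*} [MeasurableSpace Ω] (κ : Kernel Ω Ω)
    [IsMarkovKernel κ] (π : Measure Ω) [IsProbabilityMeasure π]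
    (hinv : ∀ B : Set Ω, MeasurableSet B → π B = ∫⁻ x, κ x B ∂π)
    (hrev : Reversible κ π) :
    0 < kinfN κ π 2 ↔ 0 < kinfN κ π 1 ∧ Ksup κ π < 2 := by
  rcases Set.eq_empty_or_nonempty {A : Set Ω | MeasurableSet A ∧ 0 < π A ∧ π A < 1} with he | hne
  · -- no nontrivial set: both infima are taken over `∅`, hence equal `0` by convention
    simp [kinfN, he]
  constructor
  · intro h2
    constructor
    · refine lt_of_lt_of_le (half_pos h2) (le_csInf (hne.image _) ?_)
      rintro _ ⟨A, ⟨hA, h0, h1⟩, rfl⟩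
      have := (kinfN_le (κ := κ) 2 hA h0 h1).trans (isoQ_two_le hrev hA)
      simp only [kpow_one]
      linarith
    · refine lt_of_le_of_lt (csSup_le (hne.image _) (a := 2 - kinfN κ π 2 / 8) ?_) (by linarith)
      rintro _ ⟨A, ⟨hA, h0, h1⟩, rfl⟩
      exact isoQ_le_sub hrev hA h0 h1 h2 (kinfN_le 2 hA h0 h1)
  · rintro ⟨hk, hK⟩
    have hC : 0 < 1 + 4 / kinfN κ π 1 := by positivity
    refine lt_of_lt_of_le (div_pos (by linarith : 0 < 1 - Ksup κ π / 2) hC)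
      (le_csInf (hne.image _) ?_)
    rintro _ ⟨A, ⟨hA, h0, h1⟩, rfl⟩
    exact (div_le_iff₀ hC).2 (one_sub_le hrev hk hA h0 h1)
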